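/- arXiv:2605.10173 — 3 statements merged into one kernel-verified Lean document; each statement's English description precedes it below -/
import Mathlib

section
/- Let C be a cone, x₀ ∈ C, and A a subset of C whose complement C ∖ A is convex. Then the complement of the cast shadow shadow(A, x₀) = ⋃_{β ∈ (0,1]} shd_{x₀,β}⁻¹(A) is convex. -/
open scoped NNReal

section Semiring

variable {𝕜 E : Type*} [Semiring 𝕜] [PartialOrder 𝕜] [AddCommMonoid E] [Module 𝕜 E]

variable (𝕜) in
/-- The shadow cast by `A` when lit from `x₀`: the points `x` such that `A` meets the segment from
`x` to `x₀`, the weight `β = 0` of `x` being excluded. The weight `1 - β` of `x₀` is a separate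
variable `γ` with `β + γ = 1`, so that the notion makes sense for scalars without subtraction. -/
def castShadow (A : Set E) (x₀ : E) : Set E :=
  {x | ∃ β γ : 𝕜, 0 < β ∧ 0 ≤ γ ∧ β + γ = 1 ∧ β • x + γ • x₀ ∈ A}

lemma compl_castShadow (A : Set E) (x₀ : E) :
    (castShadow 𝕜 A x₀)ᶜ =
      ⋂ (β : 𝕜) (γ : 𝕜) (_ : 0 < β ∧ 0 ≤ γ ∧ β + γ = 1), (fun x ↦ β • x + γ • x₀) ⁻¹' Aᶜ := by
  ext x
  simp only [castShadow, Set.mem_compl_iff, Set.mem_ofPred_eq, not_exists, not_and, Set.mem_iInter,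
    Set.mem_preimage, and_imp]

lemma castShadow_eq_setOf_tsub [CanonicallyOrderedAdd 𝕜] [Sub 𝕜] [OrderedSub 𝕜]
    [AddLeftReflectLE 𝕜] (A : Set E) (x₀ : E) :
    castShadow 𝕜 A x₀ = {x | ∃ β : 𝕜, 0 < β ∧ β ≤ 1 ∧ β • x + (1 - β) • x₀ ∈ A} := by
  ext x
  constructor
  · rintro ⟨β, γ, hβ, -, hβγ, hx⟩
    have hγ : 1 - β = γ := by rw [← hβγ, add_tsub_cancel_left]
    exact ⟨β, hβ, hβγ ▸ le_self_add, hγ ▸ hx⟩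
  · rintro ⟨β, hβ, hβ_le, hx⟩
    exact ⟨β, 1 - β, hβ, zero_le, add_tsub_cancel_of_le hβ_le, hx⟩

end Semiring

section CommSemiring

variable {𝕜 E : Type*} [CommSemiring 𝕜] [PartialOrder 𝕜] [AddCommMonoid E] [Module 𝕜 E]

lemma convex_preimage_smul_add {s : Set E} (hs : Convex 𝕜 s) (β : 𝕜) (z : E) :
    Convex 𝕜 ((fun x ↦ β • x + z) ⁻¹' s) :=
  (hs.translate_preimage_left z).smul_preimage β

theorem statement7_general (x₀ : E) (A : Set E) (hA : Convex 𝕜 Aᶜ) :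
    Convex 𝕜 (castShadow 𝕜 A x₀)ᶜ := by
  rw [compl_castShadow]
  exact convex_iInter fun β ↦ convex_iInter₂ fun γ _ ↦ convex_preimage_smul_add hA β (γ • x₀)

end CommSemiring

/-- in a cone (an additive commutative monoid with an action of the
semiring of nonnegative reals), if the complement of `A` is convex, then the
complement of the cast shadow `shadow(A, x₀) = ⋃_{β ∈ (0,1]} (shd_{x₀,β})⁻¹(A)`,
where `shd_{x₀,β}(x) = β•x + (1−β)•x₀`, is convex. -/
theorem statement7 {C : Type*} [AddCommMonoid C] [Module ℝ≥0 C] (x₀ : C)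
    (A : Set C) (hA : Convex ℝ≥0 Aᶜ) :
    Convex ℝ≥0 {x : C | ∃ β : ℝ≥0, 0 < β ∧ β ≤ 1 ∧ β • x + (1 - β) • x₀ ∈ A}ᶜ := by
  rw [← castShadow_eq_setOf_tsub]
  exact statement7_general x₀ A hA
end

section
/- Let X be a topological space and P a prevision on X. The set {F : F is a sublinear prevision on X and P(h) ≤ F(h) for every h ∈ ℒX} is nonempty, upward-closed with respect to the pointwise ordering, and compact in the set of sublinear previsions on X equipped with the weak topology. -/
open scoped ENNReal NNReal

/-- A prevision on `X`: a Scott-continuous, positively homogeneous functional on the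
lower semicontinuous maps `X → ℝ≥0∞` (represented as a functional on all maps,
constrained only on lower semicontinuous arguments). -/
def IsPrevision {X : Type*} [TopologicalSpace X] (F : (X → ℝ≥0∞) → ℝ≥0∞) : Prop :=
  (∀ ⦃h h' : X → ℝ≥0∞⦄, LowerSemicontinuous h → LowerSemicontinuous h' →
      h ≤ h' → F h ≤ F h') ∧
  (∀ D : Set (X → ℝ≥0∞), D.Nonempty → (∀ h ∈ D, LowerSemicontinuous h) →
      DirectedOn (· ≤ ·) D → F (fun x => ⨆ h ∈ D, h x) = ⨆ h ∈ D, F h) ∧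
  (∀ (a : ℝ≥0) (h : X → ℝ≥0∞), LowerSemicontinuous h →
      F (fun x => (a : ℝ≥0∞) * h x) = (a : ℝ≥0∞) * F h)

/-- Sublinearity of a prevision. -/
def PSublinear {X : Type*} [TopologicalSpace X] (F : (X → ℝ≥0∞) → ℝ≥0∞) : Prop :=
  ∀ h h' : X → ℝ≥0∞, LowerSemicontinuous h → LowerSemicontinuous h' →
    F (fun x => h x + h' x) ≤ F h + F h'

/-- Superlinearity of a prevision. -/
def PSuperlinear {X : Type*} [TopologicalSpace X] (F : (X → ℝ≥0∞) → ℝ≥0∞) : Prop :=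
  ∀ h h' : X → ℝ≥0∞, LowerSemicontinuous h → LowerSemicontinuous h' →
    F h + F h' ≤ F (fun x => h x + h' x)

/-- Linearity of a prevision. -/
def PLinear {X : Type*} [TopologicalSpace X] (F : (X → ℝ≥0∞) → ℝ≥0∞) : Prop :=
  ∀ h h' : X → ℝ≥0∞, LowerSemicontinuous h → LowerSemicontinuous h' →
    F (fun x => h x + h' x) = F h + F h'

/-- Subnormalization: `F(𝟙 + h) ≤ 1 + F(h)`. -/
def PSubnormalized {X : Type*} [TopologicalSpace X] (F : (X → ℝ≥0∞) → ℝ≥0∞) : Prop :=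
  ∀ h : X → ℝ≥0∞, LowerSemicontinuous h → F (fun x => 1 + h x) ≤ 1 + F h

/-- Normalization: `F(𝟙 + h) = 1 + F(h)`. -/
def PNormalized {X : Type*} [TopologicalSpace X] (F : (X → ℝ≥0∞) → ℝ≥0∞) : Prop :=
  ∀ h : X → ℝ≥0∞, LowerSemicontinuous h → F (fun x => 1 + h x) = 1 + F h

/-- Type synonym for functionals on `ℒX`, carrying the weak topology. -/
def Functional (X : Type*) : Type _ := (X → ℝ≥0∞) → ℝ≥0∞

/-- The weak topology, generated by the subbasic open sets `[h > r] = {F | F h > r}`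
for `h` lower semicontinuous and `r ∈ [0,∞)`. -/
instance Functional.instTopologicalSpace (X : Type*) [TopologicalSpace X] :
    TopologicalSpace (Functional X) :=
  TopologicalSpace.generateFrom
    {S | ∃ (h : X → ℝ≥0∞) (r : ℝ≥0), LowerSemicontinuous h ∧
      S = {F : Functional X | (r : ℝ≥0∞) < F h}}

/-!
For `M : ℒX → [0,∞]`, let `M°` be the largest Scott-continuous functional below `M`. If `M` is
subadditive then so is `M°`: truncated subtraction of a constant preserves suprema, so the
Scott-continuous functional `k ↦ M°(k + h') - M(h')`, which lies below `M`, lies below `M°`; this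
gives `M°(h + h') ≤ M°(h) + M(h')`, and the same argument in the variable `h'` replaces `M(h')` by
`M°(h')`. Division by a positive constant yields homogeneity in the same way. Hence the pointwise
limit `L` of an ultrafilter of sublinear previsions above `P`, which is sublinear but perhaps not
Scott-continuous, can be replaced by the sublinear prevision `L°`. We have `P ≤ L°` because `P` is
Scott-continuous, and `L°` is a limit of the ultrafilter because weak convergence only bounds a
limit from above.
-/

open Filter Set Topology

section ScottHull

variable {α β γ : Type*} [Preorder α] [CompleteLattice β]

lemma scottContinuous_of_leftOrdContinuous [Preorder γ] {f : α → γ} (hf : LeftOrdContinuous f) :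
    ScottContinuous f :=
  fun _ hd _ _ ha ↦ hf hd ha

lemma scottContinuous_of_galoisConnection [Preorder γ] {l : α → γ} {u : γ → α}
    (gc : GaloisConnection l u) : ScottContinuous l :=
  fun _ _ _ _ ha ↦ gc.isLUB_l_image ha

lemma scottContinuous_sSup {S : Set (α → β)} (hS : ∀ F ∈ S, ScottContinuous F) :
    ScottContinuous (sSup S) := by
  intro d hd hdir a ha
  refine isLUB_iff_le_iff.2 fun b ↦ ?_
  have apply_le_iff (F : S) : F.1 a ≤ b ↔ ∀ x ∈ d, F.1 x ≤ b :=
    (isLUB_le_iff (hS F F.2 hd hdir ha)).trans forall_mem_image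
  simp only [mem_upperBounds, forall_mem_image, sSup_apply, iSup_le_iff, apply_le_iff]
  exact ⟨fun h x hx F ↦ h F x hx, fun h F x hx ↦ h hx F⟩

/-- The Scott-continuous hull `M°` of `M`: the largest Scott-continuous function below `M`. -/
def scottHull (M : α → β) : α → β := sSup {F | ScottContinuous F ∧ F ≤ M}

lemma scottContinuous_scottHull (M : α → β) : ScottContinuous (scottHull M) :=
  scottContinuous_sSup fun _ hF ↦ hF.1

lemma scottHull_le (M : α → β) : scottHull M ≤ M := sSup_le fun _ hF ↦ hF.2

lemma le_scottHull {F M : α → β} (hF : ScottContinuous F) (hFM : F ≤ M) : F ≤ scottHull M :=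
  le_sSup ⟨hF, hFM⟩

/-- The universal property of `M°` is stable under upper adjoints, since lower adjoints are
Scott-continuous. -/
lemma le_comp_scottHull [Preorder γ] {l : γ → β} {u : β → γ} (gc : GaloisConnection l u)
    {F : α → γ} {M : α → β} (hF : ScottContinuous F) (hFM : F ≤ u ∘ M) :
    F ≤ u ∘ scottHull M := fun x ↦
  (gc _ _).1 <| le_scottHull (hF.comp (scottContinuous_of_galoisConnection gc))
    (fun y ↦ (gc _ _).2 (hFM y)) x

lemma scottHull_add_le [Add α] [AddCommSemigroup β] [Sub β] [OrderedSub β] {M : α → β}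
    (hleft : ∀ x : α, ScottContinuous (x + ·)) (hright : ∀ y : α, ScottContinuous (· + y))
    (hM : ∀ x y, M (x + y) ≤ M x + M y) (x y : α) :
    scottHull M (x + y) ≤ scottHull M x + scottHull M y := by
  have add_le_hull_add (y : α) :
      (fun x ↦ scottHull M (x + y)) ≤ fun x ↦ scottHull M x + M y :=
    le_comp_scottHull (l := (· - M y)) (u := (· + M y)) (fun _ _ ↦ tsub_le_iff_right)
      ((hright y).comp (scottContinuous_scottHull M))
      fun x ↦ (scottHull_le M _).trans (hM x y)
  exact le_comp_scottHull (l := (· - scottHull M x)) (u := (scottHull M x + ·))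
    (fun _ _ ↦ tsub_le_iff_left) ((hleft x).comp (scottContinuous_scottHull M))
    (fun y ↦ add_le_hull_add y x) y

section SMul

variable {K : Type*} [GroupWithZero K] [PartialOrder K] [MulAction K α] [MulAction K β]
  [PosSMulMono K β] [PosSMulReflectLE K β] {M : α → β} {a : K}

lemma scottHull_smul_le (ha : 0 < a) (hsmul : ScottContinuous (a • · : α → α))
    (hM : ∀ x, M (a • x) ≤ a • M x) (x : α) : scottHull M (a • x) ≤ a • scottHull M x :=
  le_comp_scottHull (l := (a⁻¹ • ·)) (u := (a • ·)) (fun _ _ ↦ inv_smul_le_iff_of_pos ha)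
    (hsmul.comp (scottContinuous_scottHull M)) (fun y ↦ (scottHull_le M _).trans (hM y)) x

lemma scottHull_smul [PosMulReflectLT K] (hsmul : ∀ a : K, 0 < a → ScottContinuous (a • · : α → α))
    (hM : ∀ a : K, 0 < a → ∀ x, M (a • x) ≤ a • M x) (ha : 0 < a) (x : α) :
    scottHull M (a • x) = a • scottHull M x := by
  refine (scottHull_smul_le ha (hsmul a ha) (hM a ha) x).antisymm ?_
  have ha' : 0 < a⁻¹ := inv_pos.2 ha
  have hinv := scottHull_smul_le ha' (hsmul a⁻¹ ha') (hM a⁻¹ ha') (a • x)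
  rwa [inv_smul_smul₀ ha.ne', le_inv_smul_iff_of_pos ha] at hinv

end SMul

end ScottHull

/-- The cone `ℒX` of lower semicontinuous functions `X → [0,∞]`, as an `ℝ≥0`-submodule of all
functions; its elements carry the pointwise order. -/
def lscCone (X : Type*) [TopologicalSpace X] : Submodule ℝ≥0 (X → ℝ≥0∞) where
  carrier := {h | LowerSemicontinuous h}
  zero_mem' := lowerSemicontinuous_const
  add_mem' hh hh' := hh.add hh'
  smul_mem' a _ hh := (ENNReal.continuous_const_mul ENNReal.coe_ne_top).comp_lowerSemicontinuous hh
    fun _ _ hle ↦ mul_le_mul_right hle (a : ℝ≥0∞)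

section Prevision

variable {X : Type*}

lemma isLUB_biSup_apply {β : Type*} [CompleteLattice β] (D : Set (X → β)) :
    IsLUB D fun x ↦ ⨆ h ∈ D, h x :=
  isLUB_pi.2 fun _ ↦ isLUB_biSup

/-- The greatest prevision on `X`, which sends `h` to `∞` unless `h = 0` (recall `∞ * 0 = 0`). -/
noncomputable def greatestPrevision (X : Type*) : Functional X := fun h ↦ ∞ * ⨆ x, h x

lemma le_greatestPrevision {P : Functional X} (hP0 : P 0 = 0) (h : X → ℝ≥0∞) :
    P h ≤ greatestPrevision X h := by
  obtain rfl | hh := eq_or_ne h 0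
  · simp [hP0]
  · have iSup_ne_zero : ⨆ x, h x ≠ 0 := by simpa [funext_iff] using hh
    simp [greatestPrevision, ENNReal.top_mul iSup_ne_zero]

variable [TopologicalSpace X]

namespace lscCone

lemma biSup_mem {D : Set (X → ℝ≥0∞)} (hD : ∀ h ∈ D, LowerSemicontinuous h) :
    (fun x ↦ ⨆ h ∈ D, h x) ∈ lscCone X :=
  lowerSemicontinuous_biSup hD

lemma isLUB_image_coe_iff {d : Set (lscCone X)} {u : lscCone X} :
    IsLUB ((↑) '' d) (u : X → ℝ≥0∞) ↔ IsLUB d u := by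
  have of_image_coe {w : lscCone X} (hw : IsLUB ((↑) '' d) (w : X → ℝ≥0∞)) : IsLUB d w :=
    .of_image (f := ((↑) : lscCone X → X → ℝ≥0∞)) Iff.rfl hw
  refine ⟨of_image_coe, fun hu ↦ ?_⟩
  let v : lscCone X := ⟨_, biSup_mem (forall_mem_image.2 fun (h : lscCone X) (_ : h ∈ d) ↦ h.2)⟩
  have hv : IsLUB ((↑) '' d) (v : X → ℝ≥0∞) := isLUB_biSup_apply _
  rwa [hu.unique (of_image_coe hv)]

lemma scottContinuous_iff_forall_apply {α : Type*} [Preorder α] {T : α → lscCone X} :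
    ScottContinuous T ↔ ∀ x, ScottContinuous fun a ↦ (T a : X → ℝ≥0∞) x := by
  simp only [ScottContinuous, ← isLUB_image_coe_iff, isLUB_pi, image_image, Function.eval]
  exact ⟨fun h x d hd hdir a ha ↦ h hd hdir ha x, fun h d hd hdir a ha x ↦ h x hd hdir ha⟩

lemma scottContinuous_apply (x : X) : ScottContinuous fun h : lscCone X ↦ (h : X → ℝ≥0∞) x :=
  scottContinuous_iff_forall_apply.1 .id x

lemma scottContinuous_add_right (k : lscCone X) : ScottContinuous (· + k) :=
  scottContinuous_iff_forall_apply.2 fun x ↦ (scottContinuous_apply x).comp <|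
    scottContinuous_of_leftOrdContinuous <|
      (continuous_add_const (k.1 x)).leftOrdContinuous fun _ _ hle ↦ add_le_add_left hle _

lemma scottContinuous_add_left (k : lscCone X) : ScottContinuous (k + ·) := by
  simpa only [add_comm] using scottContinuous_add_right k

lemma scottContinuous_smul (a : ℝ≥0) : ScottContinuous (a • · : lscCone X → lscCone X) :=
  scottContinuous_iff_forall_apply.2 fun x ↦ (scottContinuous_apply x).comp <|
    scottContinuous_of_leftOrdContinuous <|
      (ENNReal.continuous_const_mul ENNReal.coe_ne_top).leftOrdContinuous
        fun _ _ hle ↦ mul_le_mul_right hle (a : ℝ≥0∞)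

end lscCone

lemma isPrevision_iff {F : (X → ℝ≥0∞) → ℝ≥0∞} :
    IsPrevision F ↔ ScottContinuous (fun h : lscCone X ↦ F h) ∧
      ∀ (a : ℝ≥0) (h : lscCone X), F (a • h : lscCone X) = a • F h := by
  constructor
  · rintro ⟨-, map_biSup, map_mul⟩
    refine ⟨fun d hd hdir u hu ↦ ?_, fun a h ↦ map_mul a h h.2⟩
    beta_reduce
    rw [(lscCone.isLUB_image_coe_iff.2 hu).unique (isLUB_biSup_apply _),
      map_biSup _ (hd.image _) (forall_mem_image.2 fun h _ ↦ h.2)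
        (directedOn_image.2 hdir), iSup_image]
    exact isLUB_biSup
  · rintro ⟨scott, map_smul⟩
    refine ⟨fun h h' hh hh' hle ↦ scott.monotone (a := ⟨h, hh⟩) (b := ⟨h', hh'⟩) hle,
      fun D hD hlsc hdir ↦ ?_, fun a h hh ↦ map_smul a ⟨h, hh⟩⟩
    obtain ⟨d, rfl⟩ : ∃ d : Set (lscCone X), (↑) '' d = D :=
      ⟨(↑) ⁻¹' D, image_preimage_eq_of_subset fun h hh ↦ ⟨⟨h, hlsc h hh⟩, rfl⟩⟩
    let u : lscCone X := ⟨_, lscCone.biSup_mem hlsc⟩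
    have hu : IsLUB d u := lscCone.isLUB_image_coe_iff.1 (isLUB_biSup_apply _)
    rw [iSup_image]
    exact (scott hD.of_image (directedOn_image (f := Subtype.val).1 hdir) hu).unique isLUB_biSup

lemma IsPrevision.map_zero {F : (X → ℝ≥0∞) → ℝ≥0∞} (hF : IsPrevision F) : F 0 = 0 := by
  simpa using (isPrevision_iff.1 hF).2 0 0

lemma exists_sublinear_prevision_between {P M : lscCone X → ℝ≥0∞} (hP : ScottContinuous P)
    (hPM : P ≤ M) (hadd : ∀ h k, M (h + k) ≤ M h + M k)
    (hsmul : ∀ (a : ℝ≥0) h, M (a • h) ≤ a • M h) :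
    ∃ G : Functional X, (IsPrevision G ∧ PSublinear G) ∧
      ∀ h : lscCone X, P h ≤ G h ∧ G h ≤ M h := by
  let G : Functional X := Function.extend (↑) (scottHull M) 0
  have G_coe (h : lscCone X) : G h = scottHull M h := Subtype.val_injective.extend_apply _ _ h
  refine ⟨G, ⟨isPrevision_iff.2 ⟨?_, fun a h ↦ ?_⟩, fun h k hh hk ↦ ?_⟩, fun h ↦ ?_⟩
  · simpa only [G_coe] using scottContinuous_scottHull M
  · rw [G_coe, G_coe]
    obtain rfl | ha := eq_zero_or_pos a
    · simpa using (scottHull_le M _).trans (hsmul 0 h)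
    · exact scottHull_smul (M := M) (fun b _ ↦ lscCone.scottContinuous_smul b)
        (fun b _ ↦ hsmul b) ha h
  · have hull_add_le := scottHull_add_le lscCone.scottContinuous_add_left
      lscCone.scottContinuous_add_right hadd ⟨h, hh⟩ ⟨k, hk⟩
    simp only [← G_coe] at hull_add_le
    exact hull_add_le
  · rw [G_coe]
    exact ⟨le_scottHull hP hPM h, scottHull_le M h⟩

lemma isPrevision_greatestPrevision : IsPrevision (greatestPrevision X) := by
  refine ⟨fun h h' _ _ hle ↦ ?_, fun D _ _ _ ↦ ?_, fun a h _ ↦ ?_⟩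
  · exact mul_le_mul_right (iSup_mono hle) _
  · simp only [greatestPrevision, ENNReal.mul_iSup]
    rw [iSup_comm]
    exact iSup_congr fun h ↦ iSup_comm
  · simp only [greatestPrevision, ← ENNReal.mul_iSup, mul_left_comm]

lemma psublinear_greatestPrevision : PSublinear (greatestPrevision X) := fun h h' _ _ ↦ by
  rw [greatestPrevision, greatestPrevision, greatestPrevision, ← mul_add]
  gcongr
  exact iSup_le fun x ↦ add_le_add (le_iSup h x) (le_iSup h' x)

lemma exists_forall_tendsto_ultrafilter {ι κ Y : Type*} [TopologicalSpace Y] [CompactSpace Y]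
    (f : Ultrafilter ι) (g : ι → κ → Y) :
    ∃ L : κ → Y, ∀ k, Tendsto (g · k) f (𝓝 (L k)) :=
  ⟨fun k ↦ (f.map (g · k)).lim, fun k ↦ (f.map (g · k)).le_nhds_lim⟩

lemma tendsto_functional_of_le {ι : Type*} {l : Filter ι} {F : ι → Functional X}
    {L G : Functional X} (hL : ∀ h, LowerSemicontinuous h → Tendsto (F · h) l (𝓝 (L h)))
    (hGL : ∀ h, LowerSemicontinuous h → G h ≤ L h) : Tendsto F l (𝓝 G) := by
  refine TopologicalSpace.tendsto_nhds_generateFrom_iff.2 ?_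
  rintro _ ⟨h, r, hh, rfl⟩ hr
  exact (hL h hh).eventually (lt_mem_nhds (lt_of_lt_of_le hr (hGL h hh)))

/-- The sublinear previsions on `X`, with the subspace topology of the weak topology. -/
abbrev SublinearPrevision (X : Type*) [TopologicalSpace X] : Type _ :=
  {F : Functional X // IsPrevision F ∧ PSublinear F}

lemma isCompact_sublinear_previsions_ge {P : Functional X}
    (hP : ScottContinuous fun h : lscCone X ↦ P h) :
    IsCompact {F : SublinearPrevision X |
        ∀ h : X → ℝ≥0∞, LowerSemicontinuous h → P h ≤ F.1 h} := by
  rw [isCompact_iff_ultrafilter_le_nhds]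
  intro f hf
  have hPf : ∀ᶠ F in (f : Filter (SublinearPrevision X)),
      ∀ h, LowerSemicontinuous h → P h ≤ F.1 h :=
    le_principal_iff.1 hf
  obtain ⟨L, hL⟩ := exists_forall_tendsto_ultrafilter f fun F h ↦ F.1 h
  have hPL (h : lscCone X) : P h ≤ L h := ge_of_tendsto (hL h) (hPf.mono fun F hF ↦ hF h h.2)
  have hadd (h k : lscCone X) : L (h + k : lscCone X) ≤ L h + L k :=
    le_of_tendsto_of_tendsto' (hL _) ((hL h).add (hL k)) fun F ↦ F.2.2 h k h.2 k.2
  have hsmul (a : ℝ≥0) (h : lscCone X) : L (a • h : lscCone X) ≤ a • L h :=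
    le_of_tendsto_of_tendsto' (hL _) (ENNReal.Tendsto.const_mul (hL h) (.inr ENNReal.coe_ne_top))
      fun F ↦ ((isPrevision_iff.1 F.2.1).2 a h).le
  obtain ⟨G, hG, hPGL⟩ := exists_sublinear_prevision_between hP hPL hadd hsmul
  exact ⟨⟨G, hG⟩, fun h hh ↦ (hPGL ⟨h, hh⟩).1, tendsto_subtype_rng.2 <|
    tendsto_functional_of_le (fun h _ ↦ hL h) fun h hh ↦ (hPGL ⟨h, hh⟩).2⟩

theorem statement15_general {P : Functional X} (hP : ScottContinuous fun h : lscCone X ↦ P h)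
    (hP0 : P 0 = 0) :
    {F : SublinearPrevision X |
        ∀ h : X → ℝ≥0∞, LowerSemicontinuous h → P h ≤ F.1 h}.Nonempty ∧
    (∀ F G : SublinearPrevision X,
      (∀ h : X → ℝ≥0∞, LowerSemicontinuous h → P h ≤ F.1 h) →
      (∀ h : X → ℝ≥0∞, LowerSemicontinuous h → F.1 h ≤ G.1 h) →
      (∀ h : X → ℝ≥0∞, LowerSemicontinuous h → P h ≤ G.1 h)) ∧
    IsCompact {F : SublinearPrevision X |
        ∀ h : X → ℝ≥0∞, LowerSemicontinuous h → P h ≤ F.1 h} :=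
  ⟨⟨⟨greatestPrevision X, isPrevision_greatestPrevision, psublinear_greatestPrevision⟩,
      fun h _ ↦ le_greatestPrevision hP0 h⟩,
    fun _ _ hF hFG h hh ↦ (hF h hh).trans (hFG h hh),
    isCompact_sublinear_previsions_ge hP⟩

end Prevision

/-- for every prevision `P`, the set of sublinear previsions above `P` is
nonempty, upward-closed for the pointwise ordering, and compact in the set of sublinear
previsions with the weak topology. -/
theorem statement15 {X : Type*} [TopologicalSpace X]
    (P : Functional X) (hP : IsPrevision P) :
    {F : {F : Functional X // IsPrevision F ∧ PSublinear F} |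
        ∀ h : X → ℝ≥0∞, LowerSemicontinuous h → P h ≤ F.1 h}.Nonempty ∧
    (∀ F G : {F : Functional X // IsPrevision F ∧ PSublinear F},
      (∀ h : X → ℝ≥0∞, LowerSemicontinuous h → P h ≤ F.1 h) →
      (∀ h : X → ℝ≥0∞, LowerSemicontinuous h → F.1 h ≤ G.1 h) →
      (∀ h : X → ℝ≥0∞, LowerSemicontinuous h → P h ≤ G.1 h)) ∧
    IsCompact {F : {F : Functional X // IsPrevision F ∧ PSublinear F} |
        ∀ h : X → ℝ≥0∞, LowerSemicontinuous h → P h ≤ F.1 h} := by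
  exact statement15_general (isPrevision_iff.1 hP).1 hP.map_zero
end

section
/- Let X be a topological space and P a prevision on X. For every h ∈ ℒX there exists a sublinear prevision F on X with P ≤ F pointwise and F(h) = P(h); consequently, P(h) = min{F(h) : F a sublinear prevision on X with P ≤ F pointwise}, i.e. every prevision is the pointwise minimum of the sublinear previsions above it. -/
open scoped ENNReal NNReal

/-!
Fix `h` and let `k x` be the largest weight with `k x * h x ≤ P h`. The functional
`F g = ⨆ x, k x * g x` is a sublinear prevision and `F h ≤ P h` by construction. To see that
`P ≤ F`, let `t > F g`: maximality of the weights forces `g ≤ (t / P h) • h` pointwise, so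
`P g ≤ (t / P h) * P h ≤ t` by monotonicity and homogeneity of `P`. The factor `t / P h` is `∞` when
`P h = 0`: Scott-continuity extends homogeneity to that factor.
-/

/-- The supremum functional `g ↦ ⨆ x, k x * g x` attached to a weight function `k`, which need
not be semicontinuous. -/
noncomputable def weightedSup {X : Type*} (k g : X → ℝ≥0∞) : ℝ≥0∞ :=
  ⨆ x, k x * g x

/-- The largest `k` with `k * u ≤ c`. It agrees with the quotient `c / u` except at `0 / 0` and
`∞ / ∞`, where it is `∞` while Mathlib's quotient is `0`. -/
noncomputable def maxWeight (c u : ℝ≥0∞) : ℝ≥0∞ :=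
  sSup {k | k * u ≤ c}

lemma maxWeight_mul_le (c u : ℝ≥0∞) : maxWeight c u * u ≤ c := by
  rw [maxWeight, ENNReal.sSup_mul]
  exact iSup₂_le fun _ hk => hk

lemma le_div_mul_of_maxWeight_mul_lt {c u v t : ℝ≥0∞} (hlt : maxWeight c u * v < t) :
    v ≤ t / c * u := by
  by_contra! hv
  -- Interpolating gives a denominator that is neither `0` nor `∞`.
  obtain ⟨y, hy, hyv⟩ := exists_between hv
  have hy_zero : y ≠ 0 := hy.ne_bot
  have hy_top : y ≠ ∞ := hyv.ne_top
  have htu : t * u ≤ c * y := by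
    rw [← ENNReal.mul_div_right_comm] at hy
    rw [mul_comm c]
    exact (ENNReal.div_le_iff_le_mul (.inr hy_top) (.inr hy_zero)).1 hy.le
  have hadm : t / y * u ≤ c := by
    rw [← ENNReal.mul_div_right_comm]
    exact ENNReal.div_le_of_le_mul htu
  refine hlt.not_ge ?_
  calc
    t = t / y * y := (ENNReal.div_mul_cancel hy_zero hy_top).symm
    _ ≤ maxWeight c u * v := by
      gcongr
      exact le_sSup hadm

lemma weightedSup_maxWeight_self_le {X : Type*} (c : ℝ≥0∞) (h : X → ℝ≥0∞) :
    weightedSup (fun x => maxWeight c (h x)) h ≤ c :=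
  iSup_le fun x => maxWeight_mul_le c (h x)

lemma ennreal_top_mul_eq_iSup_natCast_mul (u : ℝ≥0∞) : ∞ * u = ⨆ n : ℕ, (n : ℝ≥0∞) * u := by
  rw [← ENNReal.iSup_mul, ENNReal.iSup_natCast]

section

variable {X : Type*} [TopologicalSpace X]

lemma isPrevision_weightedSup (k : X → ℝ≥0∞) : IsPrevision (weightedSup k) := by
  refine ⟨fun g g' _ _ hg => ?_, fun D _ _ _ => ?_, fun a g _ => ?_⟩
  · exact iSup_mono fun x => mul_le_mul_right (hg x) _
  · simp only [weightedSup, ENNReal.mul_iSup]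
    rw [iSup_comm]
    exact iSup_congr fun _ => iSup_comm
  · simp only [weightedSup, ENNReal.mul_iSup, mul_left_comm]

lemma pSublinear_weightedSup (k : X → ℝ≥0∞) : PSublinear (weightedSup k) := by
  intro g g' _ _
  simp only [weightedSup, mul_add]
  exact iSup_le fun x =>
    add_le_add (le_iSup (fun x => k x * g x) x) (le_iSup (fun x => k x * g' x) x)

lemma lowerSemicontinuous_ennreal_const_mul {h : X → ℝ≥0∞} (hh : LowerSemicontinuous h)
    (a : ℝ≥0∞) : LowerSemicontinuous fun x => a * h x := by
  have finite_case {b : ℝ≥0∞} (hb : b ≠ ∞) : LowerSemicontinuous fun x => b * h x :=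
    (ENNReal.continuous_const_mul hb).comp_lowerSemicontinuous hh
      fun _ _ huv => mul_le_mul_right huv _
  by_cases ha : a = ∞
  · simp only [ha, ennreal_top_mul_eq_iSup_natCast_mul]
    exact lowerSemicontinuous_iSup fun n => finite_case (ENNReal.natCast_ne_top n)
  · exact finite_case ha

namespace IsPrevision

variable {P : (X → ℝ≥0∞) → ℝ≥0∞} {h : X → ℝ≥0∞}

lemma map_iSup (hP : IsPrevision P) {ι : Type*} [Nonempty ι] {f : ι → X → ℝ≥0∞}
    (hf : ∀ i, LowerSemicontinuous (f i)) (hdir : Directed (· ≤ ·) f) :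
    P (fun x => ⨆ i, f i x) = ⨆ i, P (f i) := by
  simpa only [iSup_range] using
    hP.2.1 (Set.range f) (Set.range_nonempty f) (Set.forall_mem_range.2 hf)
      (directedOn_range.2 hdir)

lemma map_top_mul (hP : IsPrevision P) (hh : LowerSemicontinuous h) :
    P (fun x => ∞ * h x) = ∞ * P h := by
  have hmono : Monotone fun (n : ℕ) (x : X) => (n : ℝ≥0∞) * h x := fun _ _ hmn _ => by
    dsimp only
    gcongr
  have hnat (n : ℕ) : P (fun x => n * h x) = n * P h := hP.2.2 n h hh
  simp only [ennreal_top_mul_eq_iSup_natCast_mul, ← hnat]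
  exact hP.map_iSup (fun n => lowerSemicontinuous_ennreal_const_mul hh n) hmono.directed_le

lemma map_const_mul (hP : IsPrevision P) (hh : LowerSemicontinuous h) (a : ℝ≥0∞) :
    P (fun x => a * h x) = a * P h := by
  induction a with
  | top => exact hP.map_top_mul hh
  | coe a => exact hP.2.2 a h hh

end IsPrevision

lemma le_weightedSup_maxWeight {P : (X → ℝ≥0∞) → ℝ≥0∞}
    (hmono : MonotoneOn P {g | LowerSemicontinuous g}) {h : X → ℝ≥0∞}
    (hh : LowerSemicontinuous h) (hmul : ∀ a : ℝ≥0∞, P (fun x => a * h x) ≤ a * P h)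
    {g : X → ℝ≥0∞} (hg : LowerSemicontinuous g) :
    P g ≤ weightedSup (fun x => maxWeight (P h) (h x)) g := by
  refine le_of_forall_gt_imp_ge_of_dense fun t ht => ?_
  have hgh : g ≤ fun x => t / P h * h x := fun x =>
    le_div_mul_of_maxWeight_mul_lt
      ((le_iSup (fun x => maxWeight (P h) (h x) * g x) x).trans_lt ht)
  calc
    P g ≤ P fun x => t / P h * h x :=
      hmono hg (lowerSemicontinuous_ennreal_const_mul hh _) hgh
    _ ≤ t / P h * P h := hmul _
    _ ≤ t := ENNReal.mul_le_of_le_div le_rfl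

end

theorem statement16_general {X : Type*} [TopologicalSpace X] (P : (X → ℝ≥0∞) → ℝ≥0∞)
    (hmono : MonotoneOn P {g | LowerSemicontinuous g})
    (hmul : ∀ (a : ℝ≥0∞) (g : X → ℝ≥0∞), LowerSemicontinuous g →
      P (fun x => a * g x) ≤ a * P g) :
    ∀ h : X → ℝ≥0∞, LowerSemicontinuous h →
      (∃ F : (X → ℝ≥0∞) → ℝ≥0∞, IsPrevision F ∧ PSublinear F ∧
        (∀ g : X → ℝ≥0∞, LowerSemicontinuous g → P g ≤ F g) ∧ F h = P h) ∧
      P h = ⨅ F : {F : (X → ℝ≥0∞) → ℝ≥0∞ //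
          IsPrevision F ∧ PSublinear F ∧
            ∀ g : X → ℝ≥0∞, LowerSemicontinuous g → P g ≤ F g}, F.1 h := by
  intro h hh
  set F := weightedSup fun x => maxWeight (P h) (h x)
  have hF : IsPrevision F := isPrevision_weightedSup _
  have hF_sub : PSublinear F := pSublinear_weightedSup _
  have hPF (g : X → ℝ≥0∞) (hg : LowerSemicontinuous g) : P g ≤ F g :=
    le_weightedSup_maxWeight hmono hh (fun a => hmul a h hh) hg
  have hFh : F h ≤ P h := weightedSup_maxWeight_self_le (P h) h
  refine ⟨⟨F, hF, hF_sub, hPF, hFh.antisymm (hPF h hh)⟩, le_antisymm ?_ ?_⟩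
  · exact le_iInf fun G => G.2.2.2 h hh
  · exact (iInf_le _ ⟨F, hF, hF_sub, hPF⟩).trans hFh

/-- for every prevision `P` and every lower semicontinuous `h`, there is a
sublinear prevision `F ≥ P` with `F(h) = P(h)`; consequently `P(h)` is the (attained)
infimum of `F(h)` over all sublinear previsions `F ≥ P`. -/
theorem statement16 {X : Type*} [TopologicalSpace X] (P : (X → ℝ≥0∞) → ℝ≥0∞)
    (hP : IsPrevision P) :
    ∀ h : X → ℝ≥0∞, LowerSemicontinuous h →
      (∃ F : (X → ℝ≥0∞) → ℝ≥0∞, IsPrevision F ∧ PSublinear F ∧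
        (∀ g : X → ℝ≥0∞, LowerSemicontinuous g → P g ≤ F g) ∧ F h = P h) ∧
      P h = ⨅ F : {F : (X → ℝ≥0∞) → ℝ≥0∞ //
          IsPrevision F ∧ PSublinear F ∧
            ∀ g : X → ℝ≥0∞, LowerSemicontinuous g → P g ≤ F g}, F.1 h := by
  exact statement16_general P (fun _ hg _ hh hle => hP.1 hg hh hle)
    fun a _ hg => (hP.map_const_mul hg a).le
end
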